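/- Let Φ be a set of functional dependencies over a finite schema 𝓡, and let P be an ordered partition of 𝓡 induced by the preorder P⁺ obtained from Φ. Let P' = [C'_1,…,C'_k] be any ordered partition of 𝓡 that properly refines P, i.e., every class of P' is contained in some class of P and at least one class of P is not a class of P'. Then Φ is not forward repairable over P'. (Theorem 1(ii) of the paper: a partition induced by P⁺ is maximally refined among forward-repairable partitions.) -/

import Mathlib

/-- A functional dependency over a set of attributes `α`: a pair `X → a`
with left-hand side `X` (a finite set of attributes) and right-hand side `a`. -/
structure FD (α : Type*) where
  lhs : Finset α
  rhs : α

/-- The projection `Φ[Z]` of a set of FDs over a set of attributes `Z`. -/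
def proj {α : Type*} (Φ : Set (FD α)) (Z : Finset α) : Set (FD α) :=
  {φ | φ ∈ Φ ∧ φ.lhs ⊆ Z ∧ φ.rhs ∈ Z}

/-- The prefix union `S_i = C_1 ∪ … ∪ C_i` of an ordered partition. -/
def prefS {α : Type*} [DecidableEq α] (P : List (Finset α)) (i : ℕ) : Finset α :=
  (P.take i).foldr (· ∪ ·) ∅

/-- `P = [C_1, …, C_m]` is an ordered partition of the (finite) schema:
a list of pairwise disjoint nonempty classes whose union is the whole schema. -/
def OrderedPartition {α : Type*} [DecidableEq α] [Fintype α] (P : List (Finset α)) : Prop :=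
  (∀ C ∈ P, C.Nonempty) ∧ P.Pairwise Disjoint ∧ P.foldr (· ∪ ·) ∅ = Finset.univ

/-- `Φ` is forward repairable over `P`: for every `i`, every FD in
`Φ[S_i] \ Φ[S_{i-1}]` has its right-hand side in `C_i`. -/
def ForwardRepairable {α : Type*} [DecidableEq α] (P : List (Finset α)) (Φ : Set (FD α)) : Prop :=
  ∀ (i : ℕ) (h : i < P.length),
    ∀ φ ∈ proj Φ (prefS P (i + 1)) \ proj Φ (prefS P i), φ.rhs ∈ P.get ⟨i, h⟩

/-- The base relation `P_Φ` obtained from a set of FDs: it contains all pairs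
`(a, a)` and all pairs `(b, a)` with `b ∈ X` for some FD `X → a` in `Φ`. -/
def PPhi {α : Type*} (Φ : Set (FD α)) : α → α → Prop :=
  fun b a => b = a ∨ ∃ φ ∈ Φ, φ.rhs = a ∧ b ∈ φ.lhs

/-- The preorder `P⁺` obtained from `Φ`: the transitive closure of `P_Φ`. -/
def Pplus {α : Type*} (Φ : Set (FD α)) : α → α → Prop :=
  Relation.TransGen (PPhi Φ)

/-- The equivalence `a ≡_{P⁺} a'`: mutual `P⁺`-comparability. -/
def eqvP {α : Type*} (Φ : Set (FD α)) (a a' : α) : Prop :=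
  Pplus Φ a a' ∧ Pplus Φ a' a

/-- The ordered partition `P` is induced by the preorder `P⁺` obtained from `Φ`:
its classes are exactly the equivalence classes of `≡_{P⁺}`, and earlier classes
are never `P⁺`-above later ones. -/
def InducedBy {α : Type*} (P : List (Finset α)) (Φ : Set (FD α)) : Prop :=
  (∀ a a' : α, eqvP Φ a a' ↔
      ∃ (i : ℕ) (h : i < P.length), a ∈ P.get ⟨i, h⟩ ∧ a' ∈ P.get ⟨i, h⟩) ∧
  (∀ (i j : ℕ) (hi : i < P.length) (hj : j < P.length), i < j →
      ∀ a ∈ P.get ⟨i, hi⟩, ∀ a' ∈ P.get ⟨j, hj⟩, ¬ Pplus Φ a' a)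

/-!
Along a forward repairable partition, an FD that fits into `S_i` but not into `S_{i-1}` has its
right-hand side in `C_i = S_i \ S_{i-1}`. Contrapositively, an FD whose right-hand side already
lies in `S_{i-1}` fits into `S_{i-1}` as soon as it fits into `S_i`; descending from the last
stage, where every FD fits, its left-hand side is contained in every `S_n` that contains its
right-hand side. So each `S_n` is closed under `P⁺`-predecessors, each class `C_i` is a union of
`≡_{P⁺}`-classes, and no set of mutually equivalent attributes can be split.
-/

section PrefixUnions

variable {α : Type*} [DecidableEq α] {P : List (Finset α)} {n : ℕ}

theorem mem_foldr_union {a : α} : a ∈ P.foldr (· ∪ ·) ∅ ↔ ∃ C ∈ P, a ∈ C := by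
  induction P with
  | nil => simp
  | cons C P ih => simp [ih]

theorem mem_prefS {a : α} : a ∈ prefS P n ↔ ∃ C ∈ P.take n, a ∈ C :=
  mem_foldr_union

theorem prefS_mono (P : List (Finset α)) : Monotone (prefS P) := by
  intro m n hmn a ha
  obtain ⟨C, hC, haC⟩ := mem_prefS.mp ha
  exact mem_prefS.mpr ⟨C, List.take_subset_take_left P hmn hC, haC⟩

theorem prefS_succ_of_length_le (hn : P.length ≤ n) : prefS P (n + 1) = prefS P n := by
  rw [prefS, prefS, List.take_of_length_le hn, List.take_of_length_le (hn.trans n.le_succ)]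

theorem prefS_succ (hn : n < P.length) : prefS P (n + 1) = prefS P n ∪ P[n] := by
  ext a
  simp only [Finset.mem_union, mem_prefS, List.take_succ_eq_append_getElem hn, List.mem_append,
    List.mem_singleton, or_and_right, exists_or, exists_eq_left]

theorem disjoint_prefS_getElem (hP : P.Pairwise Disjoint) (hn : n < P.length) :
    Disjoint (prefS P n) P[n] := by
  have hdisj : ∀ C ∈ P.take n, Disjoint C P[n] := by
    have htake := hP.sublist (List.take_sublist (n + 1) P)
    rw [List.take_succ_eq_append_getElem hn, List.pairwise_append] at htake
    exact fun C hC ↦ htake.2.2 C hC P[n] (List.mem_singleton_self _)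
  refine Finset.disjoint_left.mpr fun a ha ↦ ?_
  obtain ⟨C, hC, haC⟩ := mem_prefS.mp ha
  exact Finset.disjoint_left.mp (hdisj C hC) haC

theorem getElem_eq_prefS_succ_sdiff (hP : P.Pairwise Disjoint) (hn : n < P.length) :
    P[n] = prefS P (n + 1) \ prefS P n := by
  rw [prefS_succ hn, Finset.union_sdiff_cancel_left (disjoint_prefS_getElem hP hn)]

end PrefixUnions

namespace OrderedPartition

variable {α : Type*} [DecidableEq α] [Fintype α] {P : List (Finset α)} {a : α}

theorem prefS_eq_univ (hP : OrderedPartition P) {n : ℕ} (hn : P.length ≤ n) :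
    prefS P n = Finset.univ := by
  rw [prefS, List.take_of_length_le hn, hP.2.2]

theorem exists_mem (hP : OrderedPartition P) (a : α) : ∃ C ∈ P, a ∈ C :=
  mem_foldr_union.mp (hP.2.2 ▸ Finset.mem_univ a)

theorem eq_of_mem (hP : OrderedPartition P) {C D : Finset α} (hC : C ∈ P) (hD : D ∈ P)
    (haC : a ∈ C) (haD : a ∈ D) : C = D := by
  by_contra hCD
  exact Finset.disjoint_left.mp (hP.2.1.forall hC hD hCD) haC haD

end OrderedPartition

namespace ForwardRepairable

variable {α : Type*} [DecidableEq α] {P : List (Finset α)} {Φ : Set (FD α)}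

theorem mem_proj_of_mem_proj_succ (hF : ForwardRepairable P Φ) (hP : P.Pairwise Disjoint) {φ : FD α}
    {n : ℕ} (hφ : φ ∈ proj Φ (prefS P (n + 1))) (hrhs : φ.rhs ∈ prefS P n) :
    φ ∈ proj Φ (prefS P n) := by
  obtain hn | hn := lt_or_ge n P.length
  · by_contra hnew
    have hrhs' : φ.rhs ∈ P[n] := hF n hn φ ⟨hφ, hnew⟩
    exact Finset.disjoint_left.mp (disjoint_prefS_getElem hP hn) hrhs hrhs'
  · rwa [prefS_succ_of_length_le hn] at hφ

theorem mem_proj_of_le (hF : ForwardRepairable P Φ) (hP : P.Pairwise Disjoint) {φ : FD α} {m n : ℕ}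
    (hnm : n ≤ m) (hφ : φ ∈ proj Φ (prefS P m)) (hrhs : φ.rhs ∈ prefS P n) :
    φ ∈ proj Φ (prefS P n) := by
  induction m, hnm using Nat.le_induction with
  | base => exact hφ
  | succ m hnm ih => exact ih (hF.mem_proj_of_mem_proj_succ hP hφ (prefS_mono P hnm hrhs))

variable [Fintype α]

theorem lhs_subset_prefS (hF : ForwardRepairable P Φ) (hP : OrderedPartition P) {φ : FD α}
    (hφ : φ ∈ Φ) {n : ℕ} (hrhs : φ.rhs ∈ prefS P n) : φ.lhs ⊆ prefS P n := by
  have huniv : prefS P (n + P.length) = Finset.univ := hP.prefS_eq_univ (Nat.le_add_left _ _)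
  have hlast : φ ∈ proj Φ (prefS P (n + P.length)) := by simp [proj, huniv, hφ]
  exact (hF.mem_proj_of_le hP.2.1 (Nat.le_add_right _ _) hlast hrhs).2.1

theorem mem_prefS_of_pPhi (hF : ForwardRepairable P Φ) (hP : OrderedPartition P) {a b : α} {n : ℕ}
    (hba : PPhi Φ b a) (ha : a ∈ prefS P n) : b ∈ prefS P n := by
  obtain rfl | ⟨φ, hφ, rfl, hb⟩ := hba
  · exact ha
  · exact hF.lhs_subset_prefS hP hφ ha hb

theorem mem_prefS_of_pplus (hF : ForwardRepairable P Φ) (hP : OrderedPartition P) {a b : α} {n : ℕ}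
    (hba : Pplus Φ b a) (ha : a ∈ prefS P n) : b ∈ prefS P n :=
  hba.closed' (P := (· ∈ prefS P n)) (hF.mem_prefS_of_pPhi hP) ha

theorem mem_of_eqvP (hF : ForwardRepairable P Φ) (hP : OrderedPartition P) {a b : α}
    (hab : eqvP Φ a b) {C : Finset α} (hC : C ∈ P) (ha : a ∈ C) : b ∈ C := by
  obtain ⟨n, hn, rfl⟩ := List.getElem_of_mem hC
  rw [getElem_eq_prefS_succ_sdiff hP.2.1 hn, Finset.mem_sdiff] at ha ⊢
  exact ⟨hF.mem_prefS_of_pplus hP hab.2 ha.1, fun hb ↦ ha.2 (hF.mem_prefS_of_pplus hP hab.1 hb)⟩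

end ForwardRepairable

theorem InducedBy.eqvP_of_mem {α : Type*} {P : List (Finset α)} {Φ : Set (FD α)}
    (hind : InducedBy P Φ) {C : Finset α} (hC : C ∈ P) {a b : α} (ha : a ∈ C) (hb : b ∈ C) :
    eqvP Φ a b := by
  obtain ⟨i, hi, rfl⟩ := List.getElem_of_mem hC
  exact (hind.1 a b).mpr ⟨i, hi, ha, hb⟩

theorem induced_maximally_refined_general {α : Type*} [DecidableEq α] [Fintype α]
    (Φ : Set (FD α)) (P P' : List (Finset α))
    (hP : OrderedPartition P)
    (heqv : ∀ C ∈ P, ∀ a ∈ C, ∀ b ∈ C, eqvP Φ a b)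
    (hP' : OrderedPartition P')
    (hrefines : ∀ C' ∈ P', ∃ C ∈ P, C' ⊆ C)
    (hproper : ∃ C ∈ P, C ∉ P') :
    ¬ ForwardRepairable P' Φ := by
  intro hF
  obtain ⟨C, hC, hCP'⟩ := hproper
  obtain ⟨a, haC⟩ := hP.1 C hC
  obtain ⟨C', hC', haC'⟩ := hP'.exists_mem a
  have hsub : C' ⊆ C := by
    obtain ⟨D, hD, hC'D⟩ := hrefines C' hC'
    rwa [hP.eq_of_mem hC hD haC (hC'D haC')]
  have hsup : C ⊆ C' := fun b hb ↦ hF.mem_of_eqvP hP' (heqv C hC a haC b hb) hC' haC'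
  exact hCP' (hsup.antisymm hsub ▸ hC')

/-- Theorem 1(ii): a partition induced by `P⁺` is maximally refined among
forward-repairable partitions: no ordered partition `P'` that properly refines
`P` (every class of `P'` lies in some class of `P`, and some class of `P` is not
a class of `P'`) is forward repairable for `Φ`. -/
theorem induced_maximally_refined {α : Type*} [DecidableEq α] [Fintype α]
    (Φ : Set (FD α)) (P P' : List (Finset α))
    (hP : OrderedPartition P)
    (hind : InducedBy P Φ)
    (hP' : OrderedPartition P')
    (hrefines : ∀ C' ∈ P', ∃ C ∈ P, C' ⊆ C)
    (hproper : ∃ C ∈ P, C ∉ P') :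
    ¬ ForwardRepairable P' Φ :=
  induced_maximally_refined_general Φ P P' hP (fun _ hC _ ha _ hb ↦ hind.eqvP_of_mem hC ha hb)
    hP' hrefines hproper
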